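/- Let I and J be finite index sets, let (aᵢ)_{i∈I}, (bᵢ)_{i∈I} be real numbers with bᵢ ≠ 0 for all i, let (uⱼ)_{j∈J}, (vⱼ)_{j∈J} be real numbers with vⱼ ≠ 0 for all j, let c₁, c₂ ≥ 0, and let r̄, r ∈ ℝ. If Σ_{i∈I} aᵢ²/(2|bᵢ|) + (c₁/2)·r̄ + (c₂/2)·Σ_{j∈J} uⱼ²/|vⱼ| ≤ Σ_{i∈I} bᵢ²/(2|bᵢ|) + (c₁/2)·r + (c₂/2)·Σ_{j∈J} vⱼ²/|vⱼ|, then Σ_{i∈I} |aᵢ| + (c₁/2)·r̄ + c₂·Σ_{j∈J} |uⱼ| ≤ Σ_{i∈I} |bᵢ| + (c₁/2)·r + c₂·Σ_{j∈J} |vⱼ|. -/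

import Mathlib

theorem key_ineq (x y : ℝ) (hy : y ≠ 0) :
    |x| + y ^ 2 / (2 * |y|) ≤ |y| + x ^ 2 / (2 * |y|) := by
  have hp : 0 < |y| := abs_pos.mpr hy
  rw [← sq_abs x, ← sq_abs y]
  have e : |y| + |x| ^ 2 / (2 * |y|) - (|x| + |y| ^ 2 / (2 * |y|)) =
      (|x| - |y|) ^ 2 / (2 * |y|) := by
    field_simp
    ring
  have : 0 ≤ (|x| - |y|) ^ 2 / (2 * |y|) := by positivity
  linarith

theorem stmt_4 {ι κ : Type*} (I : Finset ι) (J : Finset κ)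
    (a b : ι → ℝ) (u v : κ → ℝ) (c₁ c₂ : ℝ) (r' r : ℝ)
    (hb : ∀ i ∈ I, b i ≠ 0) (hv : ∀ j ∈ J, v j ≠ 0)
    (hc₁ : 0 ≤ c₁) (hc₂ : 0 ≤ c₂)
    (h : ∑ i ∈ I, (a i) ^ 2 / (2 * |b i|) + c₁ / 2 * r' +
          c₂ / 2 * ∑ j ∈ J, (u j) ^ 2 / |v j| ≤
        ∑ i ∈ I, (b i) ^ 2 / (2 * |b i|) + c₁ / 2 * r +
          c₂ / 2 * ∑ j ∈ J, (v j) ^ 2 / |v j|) :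
    ∑ i ∈ I, |a i| + c₁ / 2 * r' + c₂ * ∑ j ∈ J, |u j| ≤
      ∑ i ∈ I, |b i| + c₁ / 2 * r + c₂ * ∑ j ∈ J, |v j| := by
  have h1 : ∑ i ∈ I, (|a i| + (b i) ^ 2 / (2 * |b i|)) ≤
      ∑ i ∈ I, (|b i| + (a i) ^ 2 / (2 * |b i|)) :=
    Finset.sum_le_sum fun i hi => key_ineq (a i) (b i) (hb i hi)
  have h2 : ∑ j ∈ J, (|u j| + (1 / 2) * ((v j) ^ 2 / |v j|)) ≤
      ∑ j ∈ J, (|v j| + (1 / 2) * ((u j) ^ 2 / |v j|)) := by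
    refine Finset.sum_le_sum fun j hj => ?_
    have := key_ineq (u j) (v j) (hv j hj)
    rw [mul_comm 2, ← div_div, ← div_div] at this
    linarith
  simp only [Finset.sum_add_distrib, ← Finset.mul_sum] at h1 h2
  have h3 := mul_le_mul_of_nonneg_left h2 hc₂
  linarith
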